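/- Let 2 ≤ n₁, n₁ + 2 ≤ n₂ ≤ m, and let V be a dissipative quadratic stochastic operator on S^{m-1} with coefficients p_{ij,k} such that p_{k+1,k+1,k} = 1 for all k ∈ {1,…,n₁−1} ∪ {n₁+1,…,n₂−1}, p_{11,n₁} = 1, p_{n₁+1,n₁+1,n₂} = 1, and for every k with n₂+1 ≤ k ≤ m there is no i with p_{ii,k} = 1. Then the set of fixed points of V equals {x ∈ S^{m-1} : x₁ = ⋯ = x_{n₁}, x_{n₁+1} = ⋯ = x_{n₂}, and x_i = 0 for all i > n₂}; in particular V has infinitely many fixed points. -/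

import Mathlib

open Finset Filter Topology

/-- `Majorizes y x` means `x ≺ y`: for every `k`, the sum of the `k` largest components of
`x` is at most the sum of the `k` largest components of `y`.  This is expressed via the
standard equivalent form: every subset-sum of `x` is dominated by some subset-sum of `y`
over a subset of the same cardinality (the maximum of the latter over subsets of
cardinality `k` being exactly the sum of the `k` largest components of `y`). -/
def Majorizes {m : ℕ} (y x : Fin m → ℝ) : Prop :=
  ∀ A : Finset (Fin m), ∃ B : Finset (Fin m),
    B.card = A.card ∧ ∑ i ∈ A, x i ≤ ∑ i ∈ B, y i

/-- The quadratic operator `(Vx)_k = ∑_{i,j} p_{ij,k} x_i x_j` with heredity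
coefficients `p`. -/
def QSO {m : ℕ} (p : Fin m → Fin m → Fin m → ℝ) (x : Fin m → ℝ) : Fin m → ℝ :=
  fun k => ∑ i, ∑ j, p i j k * x i * x j

/-- Conditions on heredity coefficients: symmetry, nonnegativity, stochasticity. -/
def IsQSOCoeff {m : ℕ} (p : Fin m → Fin m → Fin m → ℝ) : Prop :=
  (∀ i j k, p i j k = p j i k) ∧ (∀ i j k, 0 ≤ p i j k) ∧ (∀ i j, ∑ k, p i j k = 1)

/-- Dissipativity of the q.s.o.: `V x ≻ x` for every `x` in the simplex. -/
def IsDissipative {m : ℕ} (p : Fin m → Fin m → Fin m → ℝ) : Prop :=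
  ∀ x ∈ stdSimplex ℝ (Fin m), Majorizes (QSO p x) x

/-- The `k`-th vertex of the simplex (the `k`-th standard basis vector). -/
def vertex {m : ℕ} (k : Fin m) : Fin m → ℝ := fun j => if j = k then 1 else 0

/-- The ω-limit set of the trajectory of `x` under `V`: the set of all limit points of
the sequence `(Vⁿ x)ₙ`. -/
def omegaLimitSet {m : ℕ} (V : (Fin m → ℝ) → Fin m → ℝ) (x : Fin m → ℝ) :
    Set (Fin m → ℝ) :=
  {y | ∃ φ : ℕ → ℕ, StrictMono φ ∧ Tendsto (fun n => V^[φ n] x) atTop (𝓝 y)}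

lemma qso_single_add_single {m : ℕ} {p : Fin m → Fin m → Fin m → ℝ}
    (hsymm : ∀ i j k, p i j k = p j i k) (i j k : Fin m) (a b : ℝ) :
    QSO p (Pi.single i a + Pi.single j b) k =
      a ^ 2 * p i i k + 2 * a * b * p i j k + b ^ 2 * p j j k := by
  have h : ∀ c d : Fin m, p c d k * (Pi.single i a + Pi.single j b : Fin m → ℝ) c *
      (Pi.single i a + Pi.single j b : Fin m → ℝ) d =
      (if c = i then (if d = i then p i i k * a * a else 0) else 0) +
      (if c = i then (if d = j then p i j k * a * b else 0) else 0) +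
      (if c = j then (if d = i then p j i k * b * a else 0) else 0) +
      (if c = j then (if d = j then p j j k * b * b else 0) else 0) := by
    intro c d
    simp only [Pi.add_apply, Pi.single_apply]
    by_cases h1 : c = i <;> by_cases h2 : c = j <;> by_cases h3 : d = i <;>
      by_cases h4 : d = j <;> subst_vars <;> simp [*] <;> ring
  simp only [QSO, h, Finset.sum_add_distrib, Finset.sum_ite_eq', Finset.mem_univ, if_true,
    Finset.sum_ite_irrel, Finset.sum_const_zero]
  rw [hsymm j i k]
  ring

lemma single_add_single_mem_stdSimplex {m : ℕ} (i j : Fin m) {t : ℝ} (h0 : 0 ≤ t) (h1 : t ≤ 1) :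
    (Pi.single i (1 - t) + Pi.single j t : Fin m → ℝ) ∈ stdSimplex ℝ (Fin m) := by
  refine ⟨fun c => ?_, by simp [Finset.sum_add_distrib]⟩
  simp only [Pi.add_apply, Pi.single_apply]
  split_ifs <;> linarith

lemma Majorizes.exists_le {m : ℕ} {x y : Fin m → ℝ} (h : Majorizes y x) (i : Fin m) :
    ∃ k, x i ≤ y k := by
  obtain ⟨B, hB, hle⟩ := h {i}
  obtain ⟨k, rfl⟩ := Finset.card_eq_one.mp (hB.trans (Finset.card_singleton i))
  exact ⟨k, by simpa using hle⟩

lemma IsQSOCoeff.le_one {m : ℕ} {p : Fin m → Fin m → Fin m → ℝ} (hp : IsQSOCoeff p)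
    (i j k : Fin m) : p i j k ≤ 1 :=
  hp.2.2 i j ▸ Finset.single_le_sum (fun l _ => hp.2.1 i j l) (Finset.mem_univ k)

lemma IsQSOCoeff.add_le_one {m : ℕ} {p : Fin m → Fin m → Fin m → ℝ} (hp : IsQSOCoeff p)
    (i j : Fin m) {k l : Fin m} (hkl : k ≠ l) : p i j k + p i j l ≤ 1 := by
  rw [← hp.2.2 i j, ← Finset.sum_pair hkl]
  exact Finset.sum_le_sum_of_subset_of_nonneg (Finset.subset_univ _) fun c _ _ => hp.2.1 i j c

lemma IsDissipative.exists_diag_eq_one {m : ℕ} {p : Fin m → Fin m → Fin m → ℝ}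
    (hp : IsQSOCoeff p) (hd : IsDissipative p) (i : Fin m) : ∃ k, p i i k = 1 := by
  obtain ⟨k, hk⟩ := (hd _ (single_add_single_mem_stdSimplex i i le_rfl zero_le_one)).exists_le i
  rw [qso_single_add_single hp.1] at hk
  exact ⟨k, le_antisymm (hp.le_one i i k) (by simpa using hk)⟩

lemma IsDissipative.half_le {m : ℕ} {p : Fin m → Fin m → Fin m → ℝ}
    (hp : IsQSOCoeff p) (hd : IsDissipative p) {i j k : Fin m} (hij : i ≠ j)
    (hk : p i i k = 1) : 1 / 2 ≤ p i j k := by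
  have key : ∀ t : ℝ, 0 < t → t ≤ 1 / 4 → 1 / 2 - t ≤ p i j k := by
    intro t ht0 ht
    obtain ⟨l, hl⟩ :=
      (hd _ (single_add_single_mem_stdSimplex i j ht0.le (by linarith))).exists_le i
    rw [qso_single_add_single hp.1] at hl
    simp only [Pi.add_apply, Pi.single_eq_same, Pi.single_eq_of_ne hij, add_zero] at hl
    have hj1 := hp.le_one j j l
    have hij1 := hp.le_one i j l
    have hij0 := hp.2.1 i j l
    have hjt : t ^ 2 * p j j l ≤ t ^ 2 := by nlinarith [sq_nonneg t]
    by_cases hlk : l = k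
    · subst hlk
      rw [hk] at hl
      have h2 : t * (1 - t) ≤ t * (2 * (1 - t) * p i j l + t) := by nlinarith
      have h3 := le_of_mul_le_mul_left h2 ht0
      nlinarith
    · have h0 : p i i l = 0 :=
        le_antisymm (by linarith [hp.add_le_one i i hlk]) (hp.2.1 i i l)
      rw [h0] at hl
      have h4 : 2 * (1 - t) * t * p i j l ≤ 2 * (1 - t) * t * 1 :=
        mul_le_mul_of_nonneg_left hij1 (by nlinarith)
      nlinarith
  by_contra! h
  have h1 := key (min (1 / 4) ((1 / 2 - p i j k) / 2)) (lt_min (by norm_num) (by linarith))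
    (min_le_left _ _)
  have h2 := min_le_right (1 / 4) ((1 / 2 - p i j k) / 2)
  linarith

lemma IsQSOCoeff.sum_add_le_one {m : ℕ} {p : Fin m → Fin m → Fin m → ℝ} (hp : IsQSOCoeff p)
    (i j : Fin m) (s t : Finset (Fin m)) (hst : Disjoint s t) :
    ∑ k ∈ s, p i j k + ∑ k ∈ t, p i j k ≤ 1 := by
  rw [← hp.2.2 i j, ← Finset.sum_union hst]
  exact Finset.sum_le_sum_of_subset_of_nonneg (Finset.subset_univ _) fun c _ _ => hp.2.1 i j c

/-- If the diagonal images `f i` avoid `s` and are pairwise distinct off `s`, then no fixed point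
charges `s`. -/
lemma IsDissipative.eq_zero_of_fixed {m : ℕ} {p : Fin m → Fin m → Fin m → ℝ}
    (hp : IsQSOCoeff p) (hd : IsDissipative p) {f : Fin m → Fin m} (hf : ∀ i, p i i (f i) = 1)
    {s : Finset (Fin m)} (hfs : ∀ i, f i ∉ s) (hinj : Set.InjOn f {i | i ∉ s})
    {x : Fin m → ℝ} (hx : x ∈ stdSimplex ℝ (Fin m)) (hfix : QSO p x = x) :
    ∀ i ∈ s, x i = 0 := by
  set b : Fin m → ℝ := fun i => if i ∈ s then 1 else 0 with hb
  set T := ∑ i, b i * x i with hT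
  have hTs : T = ∑ i ∈ s, x i := by simp [hT, hb, Finset.sum_ite_mem]
  have hq : ∀ i j, ∑ k ∈ s, p i j k ≤ (b i + b j - b i * b j) / 2 := by
    intro i j
    have hle : ∀ t : Finset (Fin m), Disjoint s t →
        ∑ k ∈ s, p i j k ≤ 1 - ∑ k ∈ t, p i j k := fun t ht => by
      linarith [hp.sum_add_le_one i j s t ht]
    have h1 := hle {f i} (by simp [hfs])
    rw [Finset.sum_singleton] at h1
    by_cases hij : i = j
    · subst hij
      rw [hf] at h1
      have : b i = 0 ∨ b i = 1 := by simp only [hb]; split_ifs <;> simp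
      rcases this with h | h <;> rw [h] <;> linarith
    have h2 := hd.half_le hp hij (hf i)
    by_cases hi : i ∈ s
    · by_cases hj : j ∈ s <;> simp only [hb, hi, hj, if_true, if_false] <;> linarith
    by_cases hj : j ∈ s
    · simp only [hb, hi, hj, if_true, if_false]; linarith
    have hne : f i ≠ f j := fun h => hij (hinj hi hj h)
    have h3 := hle {f i, f j} (by simp [hfs])
    rw [Finset.sum_pair hne] at h3
    have h4 := hd.half_le hp (Ne.symm hij) (hf j)
    rw [hp.1] at h4
    simp only [hb, hi, hj, if_false]
    linarith
  have hsum : T = ∑ i, ∑ j, (∑ k ∈ s, p i j k) * (x i * x j) := by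
    rw [hTs]
    conv_lhs => rw [← hfix]
    simp only [QSO, Finset.sum_mul]
    rw [Finset.sum_comm]
    refine Finset.sum_congr rfl fun i _ => ?_
    rw [Finset.sum_comm]
    exact Finset.sum_congr rfl fun j _ => Finset.sum_congr rfl fun k _ => mul_assoc _ _ _
  have hbound : T ≤ ∑ i, ∑ j, (b i + b j - b i * b j) / 2 * (x i * x j) := by
    conv_lhs => rw [hsum]
    exact Finset.sum_le_sum fun i _ => Finset.sum_le_sum fun j _ =>
      mul_le_mul_of_nonneg_right (hq i j) (mul_nonneg (hx.1 i) (hx.1 j))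
  have hval : ∑ i, ∑ j, (b i + b j - b i * b j) / 2 * (x i * x j) = T - T ^ 2 / 2 := by
    have h : ∀ i j, (b i + b j - b i * b j) / 2 * (x i * x j) =
        (b i * x i) * x j / 2 + x i * (b j * x j) / 2 - (b i * x i) * (b j * x j) / 2 := by
      intro i j; ring
    simp only [h, Finset.sum_sub_distrib, Finset.sum_add_distrib, ← Finset.sum_div,
      ← Finset.sum_mul_sum, hx.2]
    rw [← hT]
    ring
  have hT0 : T = 0 := by
    have : T ^ 2 ≤ 0 := by linarith
    exact pow_eq_zero_iff two_ne_zero |>.mp (le_antisymm this (sq_nonneg T))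
  rw [hTs] at hT0
  exact (Finset.sum_eq_zero_iff_of_nonneg fun i _ => hx.1 i).mp hT0

/-- On the face of the simplex where `f` is injective, `V` permutes coordinates along `f`. -/
lemma IsDissipative.qso_apply {m : ℕ} {p : Fin m → Fin m → Fin m → ℝ}
    (hp : IsQSOCoeff p) (hd : IsDissipative p) {f : Fin m → Fin m} (hf : ∀ i, p i i (f i) = 1)
    {s : Finset (Fin m)} (hinj : Set.InjOn f {i | i ∉ s})
    {x : Fin m → ℝ} (hx : x ∈ stdSimplex ℝ (Fin m)) (hxs : ∀ i ∈ s, x i = 0) (k : Fin m) :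
    QSO p x k = ∑ i, if f i = k then x i else 0 := by
  set d : Fin m → ℝ := fun i => if f i = k then 1 else 0 with hdd
  have hpij : ∀ i j, i ∉ s → j ∉ s → p i j k = (d i + d j) / 2 := by
    intro i j hi hj
    by_cases hij : i = j
    · subst hij
      by_cases hk : f i = k
      · subst hk; simp [hdd, hf]
      · have := hp.add_le_one i i hk
        rw [hf] at this
        simp only [hdd, hk, if_false]
        linarith [hp.2.1 i i k]
    have hne : f i ≠ f j := fun h => hij (hinj hi hj h)
    have h1 := hd.half_le hp hij (hf i)
    have h2 := hd.half_le hp (Ne.symm hij) (hf j)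
    rw [hp.1] at h2
    have h3 := hp.add_le_one i j hne
    by_cases hki : f i = k
    · subst hki
      simp only [hdd, hne.symm, if_true, if_false]
      linarith
    by_cases hkj : f j = k
    · subst hkj
      simp only [hdd, hne, if_true, if_false]
      linarith
    have h4 := hp.sum_add_le_one i j {f i, f j} {k} (by simp [Ne.symm hki, Ne.symm hkj])
    rw [Finset.sum_pair hne, Finset.sum_singleton] at h4
    simp only [hdd, hki, hkj, if_false]
    linarith [hp.2.1 i j k]
  have hterm : ∀ i j, p i j k * x i * x j = (d i * x i) * x j / 2 + x i * (d j * x j) / 2 := by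
    intro i j
    by_cases hi : i ∈ s
    · simp [hxs i hi]
    by_cases hj : j ∈ s
    · simp [hxs j hj]
    rw [hpij i j hi hj]; ring
  have hD : ∑ i, d i * x i = ∑ i, if f i = k then x i else 0 :=
    Finset.sum_congr rfl fun i _ => by simp [hdd]
  simp only [QSO, hterm, Finset.sum_add_distrib, ← Finset.sum_div, ← Finset.sum_mul_sum, hx.2]
  rw [← hD]
  ring

/-- A point constant on each of two consecutive blocks of sizes `n₁` and `n₂ - n₁`. -/
lemma two_block_mem_stdSimplex {m n₁ n₂ : ℕ} (h₁ : 0 < n₁) (h₂ : n₁ < n₂) (hm : n₂ ≤ m)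
    {t : ℝ} (h0 : 0 ≤ t) (h1 : t ≤ 1) :
    (fun i : Fin m => if (i : ℕ) < n₁ then t / n₁ else
      if (i : ℕ) < n₂ then (1 - t) / (n₂ - n₁) else 0) ∈ stdSimplex ℝ (Fin m) := by
  obtain ⟨c, rfl⟩ := Nat.exists_eq_add_of_le h₂.le
  obtain ⟨e, rfl⟩ := Nat.exists_eq_add_of_le hm
  have hc : (c : ℝ) ≠ 0 := by simp; omega
  have hn : (n₁ : ℝ) ≠ 0 := by simp; omega
  refine ⟨fun i => ?_, ?_⟩
  · have := sub_nonneg.mpr h1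
    push_cast
    rw [add_sub_cancel_left]
    split_ifs <;> positivity
  · rw [Fin.sum_univ_eq_sum_range (fun i : ℕ => if i < n₁ then t / (n₁ : ℝ) else
      if i < n₁ + c then (1 - t) / (((n₁ + c : ℕ) : ℝ) - n₁) else 0), Finset.sum_range_add,
      Finset.sum_range_add]
    rw [Finset.sum_congr rfl (g := fun _ => t / (n₁ : ℝ))
        (fun i hi => if_pos (Finset.mem_range.mp hi)),
      Finset.sum_congr (s₁ := Finset.range c) rfl (g := fun _ => (1 - t) / (c : ℝ))
        (fun i hi => by
          have := Finset.mem_range.mp hi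
          rw [if_neg (by omega), if_pos (by omega)]; push_cast; simp),
      Finset.sum_congr (s₁ := Finset.range e) rfl (g := fun _ => (0 : ℝ))
        (fun i hi => by rw [if_neg (by omega), if_neg (by omega)])]
    simp only [Finset.sum_const, Finset.card_range, nsmul_eq_mul]
    field_simp
    ring

/-- Case 1, two cycles: a dissipative q.s.o. whose diagonal data consist
of two backward cycles on `{1,…,n₁}` and `{n₁+1,…,n₂}` (1-based), with no `i` satisfying
`p_{ii,k} = 1` for `k > n₂`, has fixed point set
`{x : x₁ = ⋯ = x_{n₁}, x_{n₁+1} = ⋯ = x_{n₂}, x_i = 0 for i > n₂}`, which is infinite.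
(0-based indexing in the formalization.) -/
theorem stmt16 {m n₁ n₂ : ℕ} (hn₁ : 2 ≤ n₁) (hn₂ : n₁ + 2 ≤ n₂) (hm : n₂ ≤ m)
    (p : Fin m → Fin m → Fin m → ℝ)
    (hp : IsQSOCoeff p) (hd : IsDissipative p)
    (hc : ∀ j : ℕ, ∀ hj : j + 1 < n₁ ∨ (n₁ ≤ j ∧ j + 1 < n₂),
      p ⟨j + 1, by omega⟩ ⟨j + 1, by omega⟩ ⟨j, by omega⟩ = 1)
    (hc1 : p ⟨0, by omega⟩ ⟨0, by omega⟩ ⟨n₁ - 1, by omega⟩ = 1)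
    (hc2 : p ⟨n₁, by omega⟩ ⟨n₁, by omega⟩ ⟨n₂ - 1, by omega⟩ = 1)
    (hc3 : ∀ k : ℕ, n₂ ≤ k → ∀ hk : k < m, ∀ i : Fin m, p i i ⟨k, hk⟩ ≠ 1) :
    {x ∈ stdSimplex ℝ (Fin m) | QSO p x = x} =
      {x ∈ stdSimplex ℝ (Fin m) |
        (∀ i j : Fin m, (i : ℕ) < n₁ → (j : ℕ) < n₁ → x i = x j) ∧
        (∀ i j : Fin m, n₁ ≤ (i : ℕ) → (i : ℕ) < n₂ → n₁ ≤ (j : ℕ) → (j : ℕ) < n₂ →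
          x i = x j) ∧
        ∀ i : Fin m, n₂ ≤ (i : ℕ) → x i = 0} ∧
    {x ∈ stdSimplex ℝ (Fin m) | QSO p x = x}.Infinite := by
  choose f hf using hd.exists_diag_eq_one hp
  have huniq : ∀ i k, p i i k = 1 → f i = k := by
    intro i k hk
    by_contra hne
    linarith [hp.add_le_one i i hne, hf i]
  have hf1 : ∀ j (hj : j + 1 < n₁ ∨ (n₁ ≤ j ∧ j + 1 < n₂)),
      f ⟨j + 1, by omega⟩ = ⟨j, by omega⟩ := fun j hj => huniq _ _ (hc j hj)
  have hf0 := huniq _ _ hc1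
  have hfn := huniq _ _ hc2
  have hfval : ∀ i : Fin m, (i : ℕ) < n₂ → (f i : ℕ) =
      if (i : ℕ) = 0 then n₁ - 1 else if (i : ℕ) = n₁ then n₂ - 1 else (i : ℕ) - 1 := by
    rintro ⟨i, hi⟩ hin
    dsimp only at hin ⊢
    split_ifs with h1 h2
    · subst h1; rw [hf0]
    · subst h2; rw [hfn]
    · obtain ⟨j, rfl⟩ := Nat.exists_eq_succ_of_ne_zero h1
      have h := hf1 j (by omega)
      simp only [Nat.succ_eq_add_one, h, Nat.add_sub_cancel]
  set s : Finset (Fin m) := Finset.univ.filter fun i => n₂ ≤ (i : ℕ) with hs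
  have hmem : ∀ i, i ∈ s ↔ n₂ ≤ (i : ℕ) := by simp [hs]
  have hfs : ∀ i, f i ∉ s := fun i hi => hc3 (f i) ((hmem _).mp hi) (f i).2 i (hf i)
  have hinj : Set.InjOn f {i | i ∉ s} := by
    intro i hi j hj hij
    simp only [Set.mem_ofPred_eq, hmem, not_le] at hi hj
    have h1 := hfval i hi
    have h2 := hfval j hj
    rw [hij, h2] at h1
    apply Fin.ext
    split_ifs at h1 <;> omega
  have hsurj : ∀ k : Fin m, (k : ℕ) < n₂ → ∃ i, i ∉ s ∧ f i = k := by
    intro k hk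
    obtain ⟨l, hl, hlk⟩ : ∃ l < n₂, (if l = 0 then n₁ - 1 else if l = n₁ then n₂ - 1 else l - 1) =
        (k : ℕ) := by
      by_cases h1 : (k : ℕ) = n₁ - 1
      · exact ⟨0, by omega, by simp [h1]⟩
      by_cases h2 : (k : ℕ) = n₂ - 1
      · exact ⟨n₁, by omega, by rw [if_neg (by omega), if_pos rfl, h2]⟩
      · exact ⟨k + 1, by omega, by rw [if_neg (by omega), if_neg (by omega), Nat.add_sub_cancel]⟩
    exact ⟨⟨l, hl.trans_le hm⟩, by rw [hmem]; exact not_le.mpr hl,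
      Fin.ext ((hfval _ hl).trans hlk)⟩
  have hV : ∀ x ∈ stdSimplex ℝ (Fin m), (∀ i ∈ s, x i = 0) → ∀ i, i ∉ s →
      QSO p x (f i) = x i := by
    intro x hx hxs i hi
    rw [hd.qso_apply hp hf hinj hx hxs, Finset.sum_eq_single i]
    · simp
    · intro j _ hji
      split_ifs with h
      · by_cases hj : j ∈ s
        · exact hxs j hj
        · exact absurd (hinj hj hi h) hji
      · rfl
    · simp
  have hV0 : ∀ x ∈ stdSimplex ℝ (Fin m), (∀ i ∈ s, x i = 0) → ∀ k ∈ s, QSO p x k = 0 := by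
    intro x hx hxs k hk
    rw [hd.qso_apply hp hf hinj hx hxs]
    exact Finset.sum_eq_zero fun i _ => if_neg (ne_of_mem_of_not_mem hk (hfs i)).symm
  have heq : {x ∈ stdSimplex ℝ (Fin m) | QSO p x = x} =
      {x ∈ stdSimplex ℝ (Fin m) |
        (∀ i j : Fin m, (i : ℕ) < n₁ → (j : ℕ) < n₁ → x i = x j) ∧
        (∀ i j : Fin m, n₁ ≤ (i : ℕ) → (i : ℕ) < n₂ → n₁ ≤ (j : ℕ) → (j : ℕ) < n₂ →
          x i = x j) ∧
        ∀ i : Fin m, n₂ ≤ (i : ℕ) → x i = 0} := by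
    ext x
    simp only [Set.mem_ofPred_eq, and_congr_right_iff]
    intro hx
    constructor
    · intro hfix
      have hxs := hd.eq_zero_of_fixed hp hf hfs hinj hx hfix
      have hstep : ∀ j (hj : j + 1 < n₁ ∨ (n₁ ≤ j ∧ j + 1 < n₂)),
          x ⟨j + 1, by omega⟩ = x ⟨j, by omega⟩ := by
        intro j hj
        have h := hV x hx hxs ⟨j + 1, by omega⟩ (by rw [hmem]; simp only; omega)
        rw [hfix, hf1 j hj] at h
        exact h.symm
      have hfst : ∀ j (hj : j < n₁), x ⟨j, by omega⟩ = x ⟨0, by omega⟩ := by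
        intro j
        induction j with
        | zero => intro _; rfl
        | succ j ih => intro hj; rw [hstep j (Or.inl hj), ih (by omega)]
      have hsnd : ∀ j (hj : n₁ + j < n₂), x ⟨n₁ + j, by omega⟩ = x ⟨n₁, by omega⟩ := by
        intro j
        induction j with
        | zero => intro _; rfl
        | succ j ih =>
          intro hj
          rw [← ih (by omega)]
          exact hstep (n₁ + j) (Or.inr ⟨by omega, hj⟩)
      refine ⟨fun i j hi hj => (hfst i hi).trans (hfst j hj).symm, ?_,
        fun i hi => hxs i ((hmem i).mpr hi)⟩
      have hsnd' : ∀ i : Fin m, n₁ ≤ (i : ℕ) → (i : ℕ) < n₂ → x i = x ⟨n₁, by omega⟩ := by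
        rintro ⟨i, him⟩ hi hi2
        obtain ⟨c, rfl⟩ := Nat.exists_eq_add_of_le hi
        exact hsnd c hi2
      exact fun i j hi hi2 hj hj2 => (hsnd' i hi hi2).trans (hsnd' j hj hj2).symm
    · rintro ⟨h1, h2, h3⟩
      have hxs : ∀ i ∈ s, x i = 0 := fun i hi => h3 i ((hmem i).mp hi)
      ext k
      by_cases hk : k ∈ s
      · rw [hV0 x hx hxs k hk, hxs k hk]
      · rw [hmem, not_le] at hk
        obtain ⟨i, hi, rfl⟩ := hsurj k hk
        rw [hV x hx hxs i hi]
        rw [hmem, not_le] at hi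
        have hfi := hfval i hi
        by_cases hi1 : (i : ℕ) < n₁
        · refine h1 _ _ hi1 ?_
          rw [hfi]; split_ifs <;> omega
        · refine h2 _ _ (by omega) hi ?_ hk
          rw [hfi]; split_ifs <;> omega
  refine ⟨heq, ?_⟩
  rw [heq]
  refine Set.infinite_of_injOn_mapsTo
    (f := fun (t : ℝ) (i : Fin m) => if (i : ℕ) < n₁ then t / n₁ else
      if (i : ℕ) < n₂ then (1 - t) / (n₂ - n₁) else 0) ?_ ?_
    (Set.Icc_infinite (zero_lt_one' ℝ))
  · intro t _ u _ htu
    have h := congrFun htu ⟨0, by omega⟩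
    have hn : (n₁ : ℝ) ≠ 0 := by simp; omega
    have hpos : 0 < n₁ := by omega
    simp only [hpos, if_true] at h
    exact (div_left_inj' hn).mp h
  · intro t ht
    refine ⟨two_block_mem_stdSimplex (by omega) (by omega) hm ht.1 ht.2, ?_, ?_, ?_⟩
    · intro i j hi hj
      simp only [hi, hj, if_true]
    · intro i j hi hi2 hj hj2
      simp only [not_lt.mpr hi, not_lt.mpr hj, hi2, hj2, if_true]
    · intro i hi
      dsimp only
      rw [if_neg (by omega), if_neg (by omega)]
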